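/- Let (X,d) be a nonempty complete metric space, α : [0,∞) → [1,∞) and β : [0,∞) → [0,1) functions such that (1) β has property (MT), and (2) there is a bounded function γ : (0,1] → [0,∞) with lim_{s→0⁺} γ(s) = 0 such that the function p(s) = s − (1−s)·γ(s) on (0,1] is essentially positive and α(t) ≤ 1 + γ(1−β(t)) for all t ≥ 0. Then α(t)·β(t) < 1 for all t > 0 (so every (α,β)-mapping is an (α,β)-contraction), and every (α,β)-mapping F of X into itself with nonempty closed values whose distance function d_F is stably positive has a fixed point x* ∈ F(x*). -/

import Mathlib

/-!
Suppose `F` has no fixed point, and iterate the mapping condition to get an orbit `x` with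
`d n = infDist (x n) (F (x n)) > 0` and `t n = dist (x n) (x (n + 1))`. Then
`d n ≤ t n ≤ α (t n) * d n` and `d (n + 1) ≤ α (t n) * β (t n) * d n`. The control function `γ`
enters only through two consequences: `α` is bounded, and `α * β` is less than `1`, uniformly
wherever `β` is bounded away from `1`.

So `d` decreases strictly to some `L`. If `L > 0`, the ratios `d (n + 1) / d n` tend to `1`, which
forces `β (t n) → 1`; since `β (t n) * t n < d n`, also `t n → L` from the right, contradicting
property (MT) at `L`. Hence `L = 0`, so `t n → 0` because `α` is bounded, and property (MT) at `0`
makes `d` decay geometrically. The orbit is therefore Cauchy, and stable positivity of `d_F` fails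
at its limit.
-/

open Filter Metric Set Topology

/-- Property (MT) of Mizoguchi and Takahashi. It is stated through eventual bounds rather than as
`limsup β (𝓝[>] t) < 1`, whose value is junk when `β` is not bounded above near `t`. -/
def HasPropertyMT (β : ℝ → ℝ) : Prop :=
  ∀ t, 0 ≤ t → ∃ b < 1, ∀ᶠ s in 𝓝[>] t, β s ≤ b

/-- A nonnegative function is stably positive if it is bounded away from `0` near each point where
it is positive. -/
def StablyPositive {X : Type*} [TopologicalSpace X] (h : X → ℝ) : Prop :=
  ∀ x, 0 < h x → ∃ U ∈ 𝓝 x, ∃ m > (0 : ℝ), ∀ y ∈ U, m ≤ h y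

/-- The set-valued map `F` is an `(α, β)`-mapping; `infDist x (F x)` is the paper's `d_F(x)`. -/
def IsAlphaBetaMapping {X : Type*} [PseudoMetricSpace X] (α β : ℝ → ℝ) (F : X → Set X) : Prop :=
  ∀ x, ∃ y ∈ F x,
    dist x y ≤ α (dist x y) * infDist x (F x) ∧ infDist y (F y) ≤ β (dist x y) * dist x y

/-- The product `α * β` is bounded away from `1` wherever `β` is. This is what the paper's
condition on `γ` says about the pair `(α, β)` itself, with `γ` eliminated. -/
def IsContractivePair (α β : ℝ → ℝ) : Prop :=
  ∀ b < 1, ∃ c < 1, ∀ t, 0 ≤ t → β t ≤ b → α t * β t ≤ c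

/-- The relations between the numbers `d n = d_F(x n)` and `t n = dist (x n) (x (n + 1))` along an
orbit `x` obtained by iterating the defining condition of an `(α, β)`-mapping without fixed
points. -/
structure IsAlphaBetaSequence (α β : ℝ → ℝ) (d t : ℕ → ℝ) : Prop where
  pos : ∀ n, 0 < d n
  le_step : ∀ n, d n ≤ t n
  step_le : ∀ n, t n ≤ α (t n) * d n
  succ_le : ∀ n, d (n + 1) ≤ β (t n) * t n

theorem hasPropertyMT_of_limsup_lt_one {β : ℝ → ℝ} (hβ : ∀ t, 0 ≤ t → β t ≤ 1)
    (h : ∀ t, 0 ≤ t → limsup β (𝓝[>] t) < 1) : HasPropertyMT β := by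
  intro t ht
  obtain ⟨b, hb, hb1⟩ := exists_between (h t ht)
  have hbdd : IsBoundedUnder (· ≤ ·) (𝓝[>] t) β :=
    isBoundedUnder_of_eventually_le <|
      eventually_mem_nhdsWithin.mono fun s (hs : t < s) => hβ s (ht.trans hs.le)
  exact ⟨b, hb1, (eventually_lt_of_limsup_lt hb hbdd).mono fun _ => le_of_lt⟩

theorem StablyPositive.not_pos_of_tendsto {X ι : Type*} [TopologicalSpace X] {h : X → ℝ}
    (hh : StablyPositive h) {l : Filter ι} [l.NeBot] {x : ι → X} {z : X}
    (hx : Tendsto x l (𝓝 z)) (h0 : Tendsto (fun i => h (x i)) l (𝓝 0)) : ¬ 0 < h z := by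
  intro hz
  obtain ⟨U, hU, m, hm, hmU⟩ := hh z hz
  obtain ⟨i, hiU, him⟩ := ((hx.eventually hU).and (h0.eventually_lt_const hm)).exists
  exact (hmU _ hiU).not_gt him

theorem isContractivePair_of_le_one_add {α β γ : ℝ → ℝ}
    (hβ : ∀ t, 0 ≤ t → β t ∈ Ico (0 : ℝ) 1)
    (hp : ∀ a > (0 : ℝ), ∃ m > (0 : ℝ), ∀ s ∈ Ioc (0 : ℝ) 1, a ≤ s → m ≤ s - (1 - s) * γ s)
    (hαγ : ∀ t, 0 ≤ t → α t ≤ 1 + γ (1 - β t)) : IsContractivePair α β := by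
  intro b hb
  obtain ⟨m, hm, hmp⟩ := hp (1 - b) (by linarith)
  refine ⟨1 - m, by linarith, fun t ht htb => ?_⟩
  obtain ⟨hβ0, hβ1⟩ := hβ t ht
  have hpt := hmp (1 - β t) ⟨sub_pos.2 hβ1, sub_le_self 1 hβ0⟩ (by linarith)
  calc α t * β t ≤ (1 + γ (1 - β t)) * β t := mul_le_mul_of_nonneg_right (hαγ t ht) hβ0
    _ = 1 - ((1 - β t) - (1 - (1 - β t)) * γ (1 - β t)) := by ring
    _ ≤ 1 - m := by linarith

theorem IsContractivePair.mul_lt_one {α β : ℝ → ℝ} (h : IsContractivePair α β) {t : ℝ}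
    (ht : 0 ≤ t) (hβ : β t < 1) : α t * β t < 1 := by
  obtain ⟨c, hc, hαβ⟩ := h (β t) hβ
  exact (hαβ t ht le_rfl).trans_lt hc

namespace IsAlphaBetaSequence

variable {α β : ℝ → ℝ} {d t : ℕ → ℝ}

theorem step_pos (h : IsAlphaBetaSequence α β d t) (n : ℕ) : 0 < t n :=
  (h.pos n).trans_le (h.le_step n)

theorem beta_pos (h : IsAlphaBetaSequence α β d t) (n : ℕ) : 0 < β (t n) :=
  pos_of_mul_pos_left ((h.pos (n + 1)).trans_le (h.succ_le n)) (h.step_pos n).le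

theorem beta_mul_step_le (h : IsAlphaBetaSequence α β d t) (n : ℕ) :
    β (t n) * t n ≤ α (t n) * β (t n) * d n :=
  calc β (t n) * t n ≤ β (t n) * (α (t n) * d n) :=
        mul_le_mul_of_nonneg_left (h.step_le n) (h.beta_pos n).le
    _ = α (t n) * β (t n) * d n := by ring

theorem succ_lt (h : IsAlphaBetaSequence α β d t) (hlt : ∀ s, 0 ≤ s → α s * β s < 1) (n : ℕ) :
    d (n + 1) < d n :=
  calc d (n + 1) ≤ α (t n) * β (t n) * d n := (h.succ_le n).trans (h.beta_mul_step_le n)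
    _ < d n := mul_lt_of_lt_one_left (h.pos n) (hlt _ (h.step_pos n).le)

theorem strictAnti (h : IsAlphaBetaSequence α β d t) (hlt : ∀ s, 0 ≤ s → α s * β s < 1) :
    StrictAnti d :=
  strictAnti_nat_of_succ_lt (h.succ_lt hlt)

theorem lt_of_tendsto (h : IsAlphaBetaSequence α β d t) (hlt : ∀ s, 0 ≤ s → α s * β s < 1)
    {L : ℝ} (hd : Tendsto d atTop (𝓝 L)) (n : ℕ) : L < d n :=
  ((h.strictAnti hlt).antitone.le_of_tendsto hd (n + 1)).trans_lt (h.succ_lt hlt n)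

theorem exists_succ_le_mul (h : IsAlphaBetaSequence α β d t) (hc : IsContractivePair α β)
    {b : ℝ} (hb : b < 1) : ∃ c < 1, ∀ n, β (t n) ≤ b → d (n + 1) ≤ c * d n := by
  obtain ⟨c, hc1, hcb⟩ := hc b hb
  refine ⟨c, hc1, fun n hn => ?_⟩
  calc d (n + 1) ≤ α (t n) * β (t n) * d n := (h.succ_le n).trans (h.beta_mul_step_le n)
    _ ≤ c * d n := mul_le_mul_of_nonneg_right (hcb _ (h.step_pos n).le hn) (h.pos n).le

theorem eventually_lt_beta (h : IsAlphaBetaSequence α β d t)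
    (hlt : ∀ s, 0 ≤ s → α s * β s < 1) (hc : IsContractivePair α β) {L : ℝ}
    (hd : Tendsto d atTop (𝓝 L)) (hL : 0 < L) {b : ℝ} (hb : b < 1) :
    ∀ᶠ n in atTop, b < β (t n) := by
  obtain ⟨c, hc1, hcd⟩ := h.exists_succ_le_mul hc hb
  have hcL : ∀ᶠ n in atTop, c * d n < L :=
    (hd.const_mul c).eventually_lt_const (mul_lt_of_lt_one_left hL hc1)
  filter_upwards [hcL] with n hn
  by_contra! hβb
  exact (h.lt_of_tendsto hlt hd (n + 1)).not_ge ((hcd n hβb).trans hn.le)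

theorem tendsto_step_nhdsGT (h : IsAlphaBetaSequence α β d t)
    (hlt : ∀ s, 0 ≤ s → α s * β s < 1) (hc : IsContractivePair α β) {L : ℝ}
    (hd : Tendsto d atTop (𝓝 L)) (hL : 0 < L) : Tendsto t atTop (𝓝[>] L) := by
  have hLt (n : ℕ) : L < t n := (h.lt_of_tendsto hlt hd n).trans_le (h.le_step n)
  refine tendsto_nhdsWithin_iff.2 ⟨tendsto_order.2 ⟨?_, ?_⟩, .of_forall hLt⟩
  · exact fun u hu => .of_forall fun n => hu.trans (hLt n)
  · intro u hu
    have hu0 : 0 < u := hL.trans hu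
    obtain ⟨b, hLb, hb⟩ := exists_between ((div_lt_one hu0).2 hu)
    filter_upwards [h.eventually_lt_beta hlt hc hd hL hb,
      hd.eventually_lt_const ((div_lt_iff₀ hu0).1 hLb)] with n hbβ hdn
    have hb0 : 0 < b := (div_pos hL hu0).trans hLb
    refine lt_of_mul_lt_mul_left ?_ hb0.le
    calc b * t n ≤ β (t n) * t n := mul_le_mul_of_nonneg_right hbβ.le (h.step_pos n).le
      _ ≤ α (t n) * β (t n) * d n := h.beta_mul_step_le n
      _ < d n := mul_lt_of_lt_one_left (h.pos n) (hlt _ (h.step_pos n).le)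
      _ < b * u := hdn

theorem tendsto_zero (h : IsAlphaBetaSequence α β d t) (hlt : ∀ s, 0 ≤ s → α s * β s < 1)
    (hc : IsContractivePair α β) (hMT : HasPropertyMT β) : Tendsto d atTop (𝓝 0) := by
  have hbdd : BddBelow (range d) := ⟨0, forall_mem_range.2 fun n => (h.pos n).le⟩
  obtain ⟨L, hd⟩ : ∃ L, Tendsto d atTop (𝓝 L) :=
    ⟨_, tendsto_atTop_ciInf (h.strictAnti hlt).antitone hbdd⟩
  have hL0 : 0 ≤ L := ge_of_tendsto' hd fun n => (h.pos n).le
  obtain rfl | hL := hL0.eq_or_lt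
  · exact hd
  obtain ⟨b, hb, hβb⟩ := hMT L hL0
  obtain ⟨n, hle, hgt⟩ := (((h.tendsto_step_nhdsGT hlt hc hd hL).eventually hβb).and
    (h.eventually_lt_beta hlt hc hd hL hb)).exists
  exact absurd hle hgt.not_ge

theorem summable_step (h : IsAlphaBetaSequence α β d t) (hlt : ∀ s, 0 ≤ s → α s * β s < 1)
    (hc : IsContractivePair α β) (hMT : HasPropertyMT β) {A : ℝ}
    (hα : ∀ s, 0 ≤ s → α s ≤ A) : Summable t := by
  have htd (n : ℕ) : t n ≤ A * d n :=
    (h.step_le n).trans (mul_le_mul_of_nonneg_right (hα _ (h.step_pos n).le) (h.pos n).le)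
  have ht0 : Tendsto t atTop (𝓝[>] 0) :=
    tendsto_nhdsWithin_iff.2 ⟨squeeze_zero (fun n => (h.step_pos n).le) htd
      (by simpa only [mul_zero] using (h.tendsto_zero hlt hc hMT).const_mul A),
      .of_forall h.step_pos⟩
  obtain ⟨b, hb, hβb⟩ := hMT 0 le_rfl
  obtain ⟨c, hc1, hcd⟩ := h.exists_succ_le_mul hc hb
  have hd : Summable d := by
    refine summable_of_ratio_norm_eventually_le hc1 ((ht0.eventually hβb).mono fun n hn => ?_)
    rw [Real.norm_of_nonneg (h.pos _).le, Real.norm_of_nonneg (h.pos _).le]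
    exact hcd n hn
  exact .of_nonneg_of_le (fun n => (h.step_pos n).le) htd (hd.mul_left A)

end IsAlphaBetaSequence

section FixedPoint

variable {X : Type*} [PseudoMetricSpace X] {α β : ℝ → ℝ} {F : X → Set X}

theorem IsAlphaBetaMapping.exists_orbit [Nonempty X] (hF : IsAlphaBetaMapping α β F)
    (hpos : ∀ x, 0 < infDist x (F x)) :
    ∃ x : ℕ → X, IsAlphaBetaSequence α β (fun n => infDist (x n) (F (x n)))
      (fun n => dist (x n) (x (n + 1))) := by
  choose f hfF hfα hfβ using hF
  obtain ⟨x₀⟩ := ‹Nonempty X›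
  refine ⟨fun n => f^[n] x₀, fun n => hpos _, fun n => ?_, fun n => ?_, fun n => ?_⟩ <;>
    simp only [Function.iterate_succ_apply']
  exacts [infDist_le_dist_of_mem (hfF _), hfα _, hfβ _]

theorem IsAlphaBetaMapping.exists_mem [Nonempty X] [CompleteSpace X]
    (hF : IsAlphaBetaMapping α β F) (hcl : ∀ x, IsClosed (F x))
    (hst : StablyPositive fun x => infDist x (F x)) (hlt : ∀ t, 0 ≤ t → α t * β t < 1)
    (hc : IsContractivePair α β) (hMT : HasPropertyMT β) {A : ℝ}
    (hα : ∀ t, 0 ≤ t → α t ≤ A) : ∃ x, x ∈ F x := by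
  by_contra! hno
  have hpos (x : X) : 0 < infDist x (F x) :=
    ((hcl x).notMem_iff_infDist_pos ((hF x).imp fun _ hy => hy.1)).1 (hno x)
  obtain ⟨x, hx⟩ := hF.exists_orbit hpos
  obtain ⟨z, hz⟩ := cauchySeq_tendsto_of_complete
    (cauchySeq_of_summable_dist (hx.summable_step hlt hc hMT hα))
  exact hst.not_pos_of_tendsto hz (hx.tendsto_zero hlt hc hMT) (hpos z)

end FixedPoint

theorem two_parameter_fixed_point_general {X : Type*} [PseudoMetricSpace X] [Nonempty X]
    [CompleteSpace X] (α β γ : ℝ → ℝ) (hβ : ∀ t, 0 ≤ t → β t ∈ Ico (0 : ℝ) 1)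
    (hMT : ∀ t, 0 ≤ t → limsup β (𝓝[>] t) < 1)
    (hγbdd : ∃ M : ℝ, ∀ s ∈ Ioc (0 : ℝ) 1, γ s ≤ M)
    (hp : ∀ a > (0 : ℝ), ∃ m > (0 : ℝ), ∀ s ∈ Ioc (0 : ℝ) 1, a ≤ s → m ≤ s - (1 - s) * γ s)
    (hαγ : ∀ t, 0 ≤ t → α t ≤ 1 + γ (1 - β t)) :
    (∀ t, 0 ≤ t → α t * β t < 1) ∧
    ∀ F : X → Set X, (∀ x, IsClosed (F x)) → IsAlphaBetaMapping α β F →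
      StablyPositive (fun x => infDist x (F x)) → ∃ x, x ∈ F x := by
  have hc : IsContractivePair α β := isContractivePair_of_le_one_add hβ hp hαγ
  have hlt : ∀ t, 0 ≤ t → α t * β t < 1 := fun t ht => hc.mul_lt_one ht (hβ t ht).2
  have hMT' : HasPropertyMT β := hasPropertyMT_of_limsup_lt_one (fun t ht => (hβ t ht).2.le) hMT
  obtain ⟨M, hM⟩ := hγbdd
  have hα : ∀ t, 0 ≤ t → α t ≤ 1 + M := fun t ht =>
    (hαγ t ht).trans <| add_le_add_right
      (hM _ ⟨sub_pos.2 (hβ t ht).2, sub_le_self 1 (hβ t ht).1⟩) 1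
  exact ⟨hlt, fun F hcl hF hst => hF.exists_mem hcl hst hlt hc hMT' hα⟩

/-- **Theorem 1.4** (main two-parameter fixed point theorem).
If `β` has the Mizoguchi–Takahashi property and `α t ≤ 1 + γ (1 - β t)` for a bounded
function `γ : (0,1] → [0,∞)` vanishing at `0⁺` such that `p s = s - (1-s) * γ s` is
essentially positive on `(0,1]`, then `α t * β t < 1` for all `t > 0` (so every
`(α,β)`-mapping is an `(α,β)`-contraction), and every `(α,β)`-mapping of a nonempty
complete metric space into itself with nonempty closed values whose distance function
`d_F` is stably positive has a fixed point. -/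
theorem two_parameter_fixed_point
    {X : Type*} [MetricSpace X] [Nonempty X] [CompleteSpace X]
    (α β : ℝ → ℝ)
    (hα : ∀ t, 0 ≤ t → 1 ≤ α t)
    (hβ : ∀ t, 0 ≤ t → β t ∈ Set.Ico (0 : ℝ) 1)
    -- (1) β has property (MT)
    (hMT : ∀ t, 0 ≤ t → Filter.limsup β (nhdsWithin t (Set.Ioi t)) < 1)
    -- (2) the control function γ
    (γ : ℝ → ℝ)
    (hγnonneg : ∀ s ∈ Set.Ioc (0 : ℝ) 1, 0 ≤ γ s)
    (hγbdd : ∃ M : ℝ, ∀ s ∈ Set.Ioc (0 : ℝ) 1, γ s ≤ M)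
    (hγlim : Filter.Tendsto γ (nhdsWithin 0 (Set.Ioc (0 : ℝ) 1)) (nhds 0))
    -- p(s) = s - (1-s)γ(s) is essentially positive on (0,1]
    (hp : ∀ a > (0 : ℝ), ∃ m > (0 : ℝ), ∀ s ∈ Set.Ioc (0 : ℝ) 1, a ≤ s →
      m ≤ s - (1 - s) * γ s)
    (hαγ : ∀ t, 0 ≤ t → α t ≤ 1 + γ (1 - β t)) :
    (∀ t > (0 : ℝ), α t * β t < 1) ∧
    ∀ F : X → Set X,
      (∀ x, (F x).Nonempty) → (∀ x, IsClosed (F x)) →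
      -- F is an (α,β)-mapping
      (∀ x : X, ∃ y ∈ F x,
        dist x y ≤ α (dist x y) * Metric.infDist x (F x) ∧
        Metric.infDist y (F y) ≤ β (dist x y) * dist x y) →
      -- the distance function d_F is stably positive
      (∀ x : X, 0 < Metric.infDist x (F x) →
        ∃ U ∈ nhds x, ∃ m > (0 : ℝ), ∀ y ∈ U, m ≤ Metric.infDist y (F y)) →
      ∃ x : X, x ∈ F x := by
  have h := two_parameter_fixed_point_general (X := X) α β γ hβ hMT hγbdd hp hαγ
  exact ⟨fun t ht => h.1 t ht.le, fun F _ => h.2 F⟩
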